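/- (Bias–variance risk bound) Let ℓ : ℝ → ℝ be differentiable with derivative Lipschitz with constant C ≥ 0, let f : ℝ^d → ℝ be Lipschitz with constant G ≥ 0, and let X be a random vector in ℝ^d with E[‖X‖²] < ∞ and mean m = E[X]. Then E[ℓ(f(X))] ≤ ℓ(E[f(X)]) + (C·G²/2)·E[‖X - m‖²]. -/

import Mathlib

open MeasureTheory

/-!
Write `Y = f(X)` and `a = E[Y]`. Since `ℓ'` is `C`-Lipschitz, `ℓ` differs from its tangent line
at `a` by at most `C/2 · (y - a)²` (`abs_sub_tangent_le`). Taking expectations at `y = Y`, the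
linear term vanishes because `a` is the mean, which leaves `E[ℓ(Y)] ≤ ℓ(a) + C/2 · Var(Y)`.
The variance is at most the mean squared deviation from any constant; with the constant `f(m)`,
`m = E[X]`, the Lipschitz bound on `f` gives `Var(Y) ≤ E[(f(X) - f(m))²] ≤ G² · E[‖X - m‖²]`.
-/

/-- Quadratic upper bound for a function with Lipschitz derivative: the gap between the bound and
the function has derivative `C (t - a) - (ℓ' t - ℓ' a)`, so it decreases before `a`, where it
vanishes, and increases after. -/
lemma le_tangent_add_sq {ℓ ℓ' : ℝ → ℝ} {C : ℝ} (hd : ∀ t, HasDerivAt ℓ (ℓ' t) t)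
    (hL : ∀ s t, |ℓ' s - ℓ' t| ≤ C * |s - t|) (a y : ℝ) :
    ℓ y ≤ ℓ a + ℓ' a * (y - a) + C / 2 * (y - a) ^ 2 := by
  set h : ℝ → ℝ := fun t => ℓ a + ℓ' a * (t - a) + C / 2 * (t - a) ^ 2 - ℓ t with hh
  have hder : ∀ t, HasDerivAt h (ℓ' a + C * (t - a) - ℓ' t) t := by
    intro t
    have h1 : HasDerivAt (fun t : ℝ => t - a) 1 t := (hasDerivAt_id t).sub_const a
    refine ((((h1.const_mul (ℓ' a)).const_add (ℓ a)).add
      ((h1.pow 2).const_mul (C / 2))).sub (hd t)).congr_deriv ?_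
    norm_num
    ring
  have hcont : Continuous h := continuous_iff_continuousAt.2 fun t => (hder t).continuousAt
  have ha : h a = 0 := by simp [hh]
  have key : 0 ≤ h y := by
    rcases le_total a y with hy | hy
    · have hm : MonotoneOn h (Set.Ici a) := by
        refine monotoneOn_of_hasDerivWithinAt_nonneg (convex_Ici a) hcont.continuousOn
          (fun t _ => (hder t).hasDerivWithinAt) fun t ht => ?_
        rw [interior_Ici, Set.mem_Ioi] at ht
        have := (abs_le.1 (hL t a)).2
        rw [abs_of_pos (sub_pos.2 ht)] at this
        linarith
      exact ha ▸ hm Set.self_mem_Ici hy hy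
    · have hm : AntitoneOn h (Set.Iic a) := by
        refine antitoneOn_of_hasDerivWithinAt_nonpos (convex_Iic a) hcont.continuousOn
          (fun t _ => (hder t).hasDerivWithinAt) fun t ht => ?_
        rw [interior_Iic, Set.mem_Iio] at ht
        have := (abs_le.1 (hL t a)).1
        rw [abs_of_neg (sub_neg.2 ht)] at this
        linarith
      exact ha ▸ hm hy Set.self_mem_Iic hy
  simp only [hh] at key
  linarith

lemma abs_sub_tangent_le {ℓ ℓ' : ℝ → ℝ} {C : ℝ} (hd : ∀ t, HasDerivAt ℓ (ℓ' t) t)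
    (hL : ∀ s t, |ℓ' s - ℓ' t| ≤ C * |s - t|) (a y : ℝ) :
    |ℓ y - ℓ a - ℓ' a * (y - a)| ≤ C / 2 * (y - a) ^ 2 := by
  have h1 := le_tangent_add_sq hd hL a y
  have h2 := le_tangent_add_sq (ℓ := fun t => -ℓ t) (ℓ' := fun t => -ℓ' t) (C := C)
    (fun t => (hd t).neg)
    (fun s t => by rw [neg_sub_neg, abs_sub_comm]; exact hL s t) a y
  rw [abs_le]
  constructor <;> linarith

/-- Bias–variance risk bound: with `ℓ` differentiable with `C`-Lipschitz
derivative, `f` `G`-Lipschitz, and `X` a square-integrable random vector with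
mean `m`, `E[ℓ(f(X))] ≤ ℓ(E[f(X)]) + (C·G²/2) · E[‖X - m‖²]`. -/
theorem bias_variance_risk_bound {Ω : Type*} [MeasurableSpace Ω]
    (μ : Measure Ω) [IsProbabilityMeasure μ] (d : ℕ)
    (ℓ : ℝ → ℝ) (C : ℝ) (hC : 0 ≤ C)
    (hdiff : Differentiable ℝ ℓ)
    (hlipℓ : LipschitzWith C.toNNReal (deriv ℓ))
    (f : EuclideanSpace ℝ (Fin d) → ℝ) (G : ℝ) (hG : 0 ≤ G)
    (hf : LipschitzWith G.toNNReal f)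
    (X : Ω → EuclideanSpace ℝ (Fin d)) (hX : Measurable X)
    (hX2 : Integrable (fun ω => ‖X ω‖ ^ 2) μ) :
    ∫ ω, ℓ (f (X ω)) ∂μ
      ≤ ℓ (∫ ω, f (X ω) ∂μ)
        + (C * G ^ 2 / 2) * ∫ ω, ‖X ω - ∫ ω', X ω' ∂μ‖ ^ 2 ∂μ := by
  have hL : ∀ s t, |deriv ℓ s - deriv ℓ t| ≤ C * |s - t| := fun s t => by
    simpa [Real.dist_eq, Real.coe_toNNReal C hC] using hlipℓ.dist_le_mul s t
  have hfL : ∀ x y, |f x - f y| ≤ G * ‖x - y‖ := fun x y => by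
    simpa [Real.dist_eq, dist_eq_norm, Real.coe_toNNReal G hG] using hf.dist_le_mul x y
  have hXL : MemLp X 2 μ := (memLp_two_iff_integrable_sq_norm hX.aestronglyMeasurable).2 hX2
  set m := ∫ ω', X ω' ∂μ with hm
  have hXm : Integrable (fun ω => ‖X ω - m‖ ^ 2) μ :=
    (hXL.sub (memLp_const m)).integrable_norm_pow (by norm_num)
  have hYmeas : AEStronglyMeasurable (fun ω => f (X ω)) μ :=
    (hf.continuous.measurable.comp hX).aestronglyMeasurable
  have hZ : MemLp (fun ω => f (X ω) - f m) 2 μ := by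
    refine (hXL.sub (memLp_const m)).of_le_mul (c := G)
      (hYmeas.sub aestronglyMeasurable_const) (Filter.Eventually.of_forall fun ω => ?_)
    exact hfL (X ω) m
  have hY : MemLp (fun ω => f (X ω)) 2 μ := by
    refine (hZ.add (memLp_const (f m))).ae_eq (Filter.Eventually.of_forall fun ω => ?_)
    simp
  set a := ∫ ω, f (X ω) ∂μ with ha
  have hY1 : Integrable (fun ω => f (X ω)) μ := hY.integrable (by norm_num)
  have hVint : Integrable (fun ω => (f (X ω) - a) ^ 2) μ :=
    (hY.sub (memLp_const a)).integrable_sq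
  have hT := abs_sub_tangent_le (fun t => (hdiff t).hasDerivAt) hL a
  have hlin : Integrable (fun ω => deriv ℓ a * (f (X ω) - a)) μ :=
    (hY1.sub (integrable_const a)).const_mul _
  have hlin0 : ∫ ω, deriv ℓ a * (f (X ω) - a) ∂μ = 0 := by
    rw [integral_const_mul, integral_sub hY1 (integrable_const a)]
    simp [ha]
  -- The two-sided tangent bound is what makes `ℓ (f X)` integrable.
  have hR : Integrable (fun ω => ℓ (f (X ω)) - ℓ a - deriv ℓ a * (f (X ω) - a)) μ := by
    refine (hVint.const_mul (C / 2)).mono' ?_ (Filter.Eventually.of_forall fun ω => hT _)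
    exact (((hdiff.continuous.comp_aestronglyMeasurable hYmeas).sub
      aestronglyMeasurable_const).sub hlin.aestronglyMeasurable)
  have hJ : ∫ ω, ℓ (f (X ω)) ∂μ ≤ ℓ a + C / 2 * ∫ ω, (f (X ω) - a) ^ 2 ∂μ := by
    have e : ∫ ω, ℓ (f (X ω)) ∂μ
        = ℓ a + ∫ ω, (ℓ (f (X ω)) - ℓ a - deriv ℓ a * (f (X ω) - a)) ∂μ := by
      have hconst : Integrable (fun ω => ℓ a + deriv ℓ a * (f (X ω) - a)) μ :=
        (integrable_const _).add hlin
      have : ∀ ω, ℓ (f (X ω)) = (ℓ (f (X ω)) - ℓ a - deriv ℓ a * (f (X ω) - a))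
          + (ℓ a + deriv ℓ a * (f (X ω) - a)) := fun ω => by ring
      rw [integral_congr_ae (Filter.Eventually.of_forall this),
        integral_add hR hconst,
        integral_add (integrable_const _) hlin, hlin0]
      simp [add_comm]
    rw [e, ← integral_const_mul]
    refine add_le_add_right ?_ (ℓ a)
    exact integral_mono hR (hVint.const_mul _) fun ω => (abs_le.1 (hT _)).2
  have hV : ∫ ω, (f (X ω) - a) ^ 2 ∂μ ≤ G ^ 2 * ∫ ω, ‖X ω - m‖ ^ 2 ∂μ := by
    calc ∫ ω, (f (X ω) - a) ^ 2 ∂μ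
        = ProbabilityTheory.variance (fun ω => f (X ω)) μ :=
          (ProbabilityTheory.variance_eq_integral hYmeas.aemeasurable).symm
      _ = ProbabilityTheory.variance (fun ω => f (X ω) - f m) μ :=
          (ProbabilityTheory.variance_sub_const hYmeas (f m)).symm
      _ ≤ ∫ ω, (f (X ω) - f m) ^ 2 ∂μ :=
          ProbabilityTheory.variance_le_expectation_sq hZ.aestronglyMeasurable
      _ ≤ ∫ ω, G ^ 2 * ‖X ω - m‖ ^ 2 ∂μ := by
          refine integral_mono hZ.integrable_sq (hXm.const_mul _) fun ω => ?_
          have := pow_le_pow_left₀ (abs_nonneg _) (hfL (X ω) m) 2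
          simpa [sq_abs, mul_pow] using this
      _ = _ := integral_const_mul _ _
  calc _ ≤ _ := hJ
    _ ≤ ℓ a + C / 2 * (G ^ 2 * ∫ ω, ‖X ω - m‖ ^ 2 ∂μ) := by gcongr
    _ = _ := by ring
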